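/- arXiv:2511.02338 — 3 statements merged into one kernel-verified Lean document; each statement's English description precedes it below -/
import Mathlib

section
/- Let t ≥ 0, 0 ≤ λ ≤ 1, and let h = h(z) belong to H¹_{μ_λ}(ℝ₊). Then λ^{1/2}/(2(1+t)^{1/2}) · ‖h‖_{L²_{μ_λ}} + (λ/4) · ‖(z/(1+t)) h‖_{L²_{μ_λ}} ≤ 2 ‖∂_z h‖_{L²_{μ_λ}}. -/
open MeasureTheory Set

noncomputable section

/-- The Gaussian weight `μ_λ(t,z) = exp(λz²/(4(1+t)))`. -/
def mu (lam t z : ℝ) : ℝ := Real.exp (lam * z ^ 2 / (4 * (1 + t)))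

/-- The squared weighted norm `‖h‖²_{L²_{μ_λ}} = ∫₀^∞ μ_λ(t,z) h(z)² dz`. -/
def L2muSq (lam t : ℝ) (h : ℝ → ℝ) : ENNReal :=
  ∫⁻ z in Set.Ioi (0 : ℝ), ENNReal.ofReal (mu lam t z * h z ^ 2)

/-!
Write `k = λ / (4 (1 + t))`, so that the weight is `w = exp (k z²)` and `w' = 2 k z w`. Expanding
`0 ≤ w (k z h + h')²` gives
`w (k h² + k² z² h²) ≤ (k z w h²)' + w h'²`.
Integrate over `[r, R] ⊆ (0, ∞)`: the boundary term at `r` has a favourable sign, and the one at `R`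
is arbitrarily small for suitable large `R`, because `w h²` is integrable whereas `1 / z` is not.
Hence `k ‖h‖² + k² ‖z h‖² ≤ ‖h'‖²`, and `√A + √B ≤ √2 √(A + B)` concludes, even with the constant
`√2`.
-/

theorem frequently_mul_le_of_integrableOn_Ioi {f : ℝ → ℝ} {a : ℝ} (hf : IntegrableOn f (Ioi a))
    {ε : ℝ} (hε : 0 < ε) : ∃ᶠ x in Filter.atTop, x * f x ≤ ε := by
  intro hlarge
  obtain ⟨b, hb⟩ := Filter.eventually_atTop.1 hlarge
  set c := max (max a b) 0
  have hac : a ≤ c := (le_max_left a b).trans (le_max_left _ _)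
  have hbc : b ≤ c := (le_max_right a b).trans (le_max_left _ _)
  refine not_integrableOn_Ioi_inv (a := c) ?_
  refine ((hf.mono_set (Ioi_subset_Ioi hac)).const_mul ε⁻¹).mono'
    measurable_inv.aestronglyMeasurable ?_
  filter_upwards [ae_restrict_mem measurableSet_Ioi] with x (hx : c < x)
  have hx0 : 0 < x := (le_max_right _ _).trans_lt hx
  have hεx : ε < x * f x := not_le.1 (hb x (hbc.trans hx.le))
  rw [Real.norm_of_nonneg (inv_nonneg.2 hx0.le), inv_mul_eq_div, le_div_iff₀ hε,
    inv_mul_le_iff₀ hx0]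
  exact hεx.le

theorem setLIntegral_Ioc_ofReal_le_of_le_deriv_add {F F' G D : ℝ → ℝ} {a b : ℝ} (hab : a ≤ b)
    (hFcont : ContinuousOn F (Icc a b)) (hF : ∀ x ∈ Ioo a b, HasDerivAt F (F' x) x)
    (hG : IntegrableOn G (Icc a b)) (hG0 : ∀ x ∈ Ioc a b, 0 ≤ G x)
    (hD : Measurable D) (hD0 : ∀ x ∈ Ioc a b, 0 ≤ D x)
    (hGD : ∀ x ∈ Ioo a b, G x ≤ F' x + D x) :
    ∫⁻ x in Ioc a b, ENNReal.ofReal (G x) ≤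
      ENNReal.ofReal (F b - F a) + ∫⁻ x in Ioc a b, ENNReal.ofReal (D x) := by
  have hGae := ae_restrict_of_forall_mem (μ := volume) measurableSet_Ioc hG0
  have hDae := ae_restrict_of_forall_mem (μ := volume) measurableSet_Ioc hD0
  rcases eq_or_ne (∫⁻ x in Ioc a b, ENNReal.ofReal (D x)) ⊤ with hDtop | hDtop
  · simp [hDtop]
  have hDint : IntegrableOn D (Ioc a b) :=
    (lintegral_ofReal_ne_top_iff_integrable hD.aestronglyMeasurable hDae).1 hDtop
  have hGint : IntegrableOn G (Ioc a b) := hG.mono_set Ioc_subset_Icc_self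
  have hreal : ∫ x in Ioc a b, G x ≤ F b - F a + ∫ x in Ioc a b, D x := by
    have hftc := intervalIntegral.integral_le_sub_of_hasDeriv_right_of_le hab hFcont
      (fun x hx => (hF x hx).hasDerivWithinAt)
      (hG.sub ((integrableOn_Icc_iff_integrableOn_Ioc enorm_ne_top).2 hDint))
      (fun x hx => sub_le_iff_le_add.2 (hGD x hx))
    rw [intervalIntegral.integral_of_le hab] at hftc
    simp only [Pi.sub_apply] at hftc
    rw [integral_sub hGint hDint] at hftc
    exact sub_le_iff_le_add.1 hftc
  rw [← ofReal_integral_eq_lintegral_ofReal hGint hGae,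
    ← ofReal_integral_eq_lintegral_ofReal hDint hDae]
  exact (ENNReal.ofReal_le_ofReal hreal).trans ENNReal.ofReal_add_le

theorem iUnion_Ioc_add_inv_add_natCast (a : ℝ) :
    ⋃ n : ℕ, Ioc (a + ((n : ℝ) + 1)⁻¹) (a + n) = Ioi a := by
  ext x
  simp only [mem_iUnion, mem_Ioc, mem_Ioi]
  constructor
  · rintro ⟨n, hn, -⟩
    exact (lt_add_of_pos_right a (by positivity)).trans hn
  · intro hx
    obtain ⟨m, hm⟩ := exists_nat_one_div_lt (sub_pos.2 hx)
    obtain ⟨n, hn⟩ := exists_nat_ge (x - a)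
    refine ⟨max m n, ?_, ?_⟩
    · have hinv : ((max m n : ℕ) + 1 : ℝ)⁻¹ ≤ 1 / (m + 1) := by
        rw [one_div]
        gcongr
        exact le_max_left m n
      linarith
    · have hn' : (n : ℝ) ≤ (max m n : ℕ) := by exact_mod_cast le_max_right m n
      linarith

theorem setLIntegral_Ioi_le_of_forall_Ioc_le {μ : Measure ℝ} {f : ℝ → ENNReal} {a : ℝ}
    {C : ENNReal} (hC : ∀ r R, a < r → ∫⁻ x in Ioc r R, f x ∂μ ≤ C) :
    ∫⁻ x in Ioi a, f x ∂μ ≤ C := by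
  have hmono : Monotone fun n : ℕ => Ioc (a + ((n : ℝ) + 1)⁻¹) (a + n) := by
    intro m n hmn
    dsimp only
    gcongr
  rw [← iUnion_Ioc_add_inv_add_natCast, setLIntegral_iUnion_of_directed f hmono.directed_le]
  exact iSup_le fun n => hC _ _ (lt_add_of_pos_right a (by positivity))

theorem setLIntegral_Ioi_ofReal_le_of_le_deriv_add {F F' G D : ℝ → ℝ} {a : ℝ}
    (hF : ∀ x ∈ Ioi a, HasDerivAt F (F' x) x) (hF0 : ∀ x ∈ Ioi a, 0 ≤ F x)
    (hFsmall : ∀ ε > 0, ∃ᶠ x in Filter.atTop, F x ≤ ε)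
    (hG : ContinuousOn G (Ioi a)) (hG0 : ∀ x ∈ Ioi a, 0 ≤ G x)
    (hD : Measurable D) (hD0 : ∀ x ∈ Ioi a, 0 ≤ D x)
    (hGD : ∀ x ∈ Ioi a, G x ≤ F' x + D x) :
    ∫⁻ x in Ioi a, ENNReal.ofReal (G x) ≤ ∫⁻ x in Ioi a, ENNReal.ofReal (D x) := by
  refine setLIntegral_Ioi_le_of_forall_Ioc_le fun r R hr => ?_
  refine ENNReal.le_of_forall_pos_le_add fun ε hε _ => ?_
  obtain ⟨S, hS, hFS⟩ := Filter.frequently_atTop.1 (hFsmall ε hε) (max r R)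
  have hrS : r ≤ S := (le_max_left r R).trans hS
  have hsub : Icc r S ⊆ Ioi a := fun x hx => hr.trans_le hx.1
  calc ∫⁻ x in Ioc r R, ENNReal.ofReal (G x)
      ≤ ∫⁻ x in Ioc r S, ENNReal.ofReal (G x) :=
        lintegral_mono_set (Ioc_subset_Ioc_right ((le_max_right r R).trans hS))
    _ ≤ ENNReal.ofReal (F S - F r) + ∫⁻ x in Ioc r S, ENNReal.ofReal (D x) :=
        setLIntegral_Ioc_ofReal_le_of_le_deriv_add hrS
          (fun x hx => (hF x (hsub hx)).continuousAt.continuousWithinAt)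
          (fun x hx => hF x (hsub (Ioo_subset_Icc_self hx))) (hG.mono hsub).integrableOn_Icc
          (fun x hx => hG0 x (hsub (Ioc_subset_Icc_self hx))) hD
          (fun x hx => hD0 x (hsub (Ioc_subset_Icc_self hx)))
          (fun x hx => hGD x (hsub (Ioo_subset_Icc_self hx)))
    _ ≤ ENNReal.ofReal ε + ∫⁻ x in Ioi a, ENNReal.ofReal (D x) := by
        gcongr
        · linarith [hF0 r hr]
        · exact Ioc_subset_Icc_self.trans hsub
    _ = (∫⁻ x in Ioi a, ENNReal.ofReal (D x)) + ε := by
        rw [ENNReal.ofReal_coe_nnreal, add_comm]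

theorem hasDerivAt_id_mul_gaussian_mul_sq {k z h' : ℝ} {h : ℝ → ℝ} (hh : HasDerivAt h h' z) :
    HasDerivAt (fun x => x * (k * (Real.exp (k * x ^ 2) * h x ^ 2)))
      (Real.exp (k * z ^ 2) *
        (k * h z ^ 2 + 2 * (k * z * h z) ^ 2 + 2 * (k * z * h z) * h')) z := by
  have hexp : HasDerivAt (fun x => Real.exp (k * x ^ 2))
      (Real.exp (k * z ^ 2) * (k * (2 * z))) z := by
    simpa using ((hasDerivAt_pow 2 z).const_mul k).exp
  refine ((hasDerivAt_id z).mul ((hexp.mul (hh.pow 2)).const_mul k)).congr_deriv ?_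
  simp only [id, Pi.mul_apply, Pi.pow_apply, Nat.cast_ofNat]
  ring

theorem setLIntegral_gaussian_mul_add_sq_le_deriv_sq {k : ℝ} (hk : 0 ≤ k)
    {h : ℝ → ℝ} (hh : DifferentiableOn ℝ h (Ioi 0))
    (hfin : ∫⁻ z in Ioi (0 : ℝ), ENNReal.ofReal (Real.exp (k * z ^ 2) * h z ^ 2) ≠ ⊤) :
    ∫⁻ z in Ioi (0 : ℝ),
        ENNReal.ofReal (Real.exp (k * z ^ 2) * (k * h z ^ 2 + (k * z * h z) ^ 2)) ≤
      ∫⁻ z in Ioi (0 : ℝ), ENNReal.ofReal (Real.exp (k * z ^ 2) * deriv h z ^ 2) := by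
  have hcont : ContinuousOn h (Ioi 0) := hh.continuousOn
  have hint : IntegrableOn (fun z => Real.exp (k * z ^ 2) * h z ^ 2) (Ioi 0) :=
    (lintegral_ofReal_ne_top_iff_integrable
      (ContinuousOn.aestronglyMeasurable (by fun_prop) measurableSet_Ioi)
      (ae_of_all _ fun z => by positivity)).1 hfin
  refine setLIntegral_Ioi_ofReal_le_of_le_deriv_add
    (fun z hz => hasDerivAt_id_mul_gaussian_mul_sq (hh.hasDerivAt (Ioi_mem_nhds hz)))
    (fun z (hz : 0 < z) => by positivity)
    (fun ε hε => frequently_mul_le_of_integrableOn_Ioi (hint.const_mul k) hε)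
    (by fun_prop) (fun z _ => by positivity) (by fun_prop) (fun z _ => by positivity) fun z _ => ?_
  have hsquare : 0 ≤ Real.exp (k * z ^ 2) * (k * z * h z + deriv h z) ^ 2 := by positivity
  linarith

theorem mu_eq_exp_mul_sq (lam t z : ℝ) : mu lam t z = Real.exp (lam / (4 * (1 + t)) * z ^ 2) := by
  rw [mu, mul_div_right_comm]

theorem mul_L2muSq_add_sq_mul_L2muSq_le {t lam : ℝ} (ht : -1 < t) (hlam : 0 ≤ lam) {h : ℝ → ℝ}
    (hh : DifferentiableOn ℝ h (Ioi 0)) (hmem : L2muSq lam t h < ⊤) :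
    ENNReal.ofReal (lam / (4 * (1 + t))) * L2muSq lam t h
        + ENNReal.ofReal ((lam / 4) ^ 2) * L2muSq lam t (fun z => z / (1 + t) * h z)
      ≤ L2muSq lam t (deriv h) := by
  have ht' : 0 < 1 + t := by linarith
  have hk : 0 ≤ lam / (4 * (1 + t)) := by positivity
  have hcont : ContinuousOn h (Ioi 0) := hh.continuousOn
  simp only [L2muSq, mu_eq_exp_mul_sq] at hmem ⊢
  refine le_trans (le_of_eq ?_)
    (setLIntegral_gaussian_mul_add_sq_le_deriv_sq hk hh hmem.ne)
  rw [← lintegral_const_mul' _ _ ENNReal.ofReal_ne_top,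
    ← lintegral_const_mul' _ _ ENNReal.ofReal_ne_top, ← lintegral_add_left']
  · refine lintegral_congr fun z => ?_
    rw [← ENNReal.ofReal_mul hk, ← ENNReal.ofReal_mul (by positivity),
      ← ENNReal.ofReal_add (by positivity) (by positivity)]
    congr 1
    field_simp
  · have hmeas : AEMeasurable (fun z => Real.exp (lam / (4 * (1 + t)) * z ^ 2) * h z ^ 2)
        (volume.restrict (Ioi 0)) := ContinuousOn.aemeasurable (by fun_prop) measurableSet_Ioi
    exact hmeas.ennreal_ofReal.const_mul _

theorem ofReal_sqrt_mul_rpow_half {c : ℝ} (hc : 0 ≤ c) (x : ENNReal) :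
    ENNReal.ofReal (Real.sqrt c) * x ^ (1 / 2 : ℝ) = (ENNReal.ofReal c * x) ^ (1 / 2 : ℝ) := by
  rw [ENNReal.mul_rpow_of_nonneg _ _ (by norm_num), Real.sqrt_eq_rpow,
    ENNReal.ofReal_rpow_of_nonneg hc (by norm_num)]

theorem rpow_half_add_rpow_half_le (x y : ENNReal) :
    x ^ (1 / 2 : ℝ) + y ^ (1 / 2 : ℝ) ≤ 2 ^ (1 / 2 : ℝ) * (x + y) ^ (1 / 2 : ℝ) := by
  have hsq : (x ^ (1 / 2 : ℝ) + y ^ (1 / 2 : ℝ)) ^ (2 : ℝ) ≤ 2 * (x + y) := by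
    refine (ENNReal.rpow_add_le_mul_rpow_add_rpow _ _ one_le_two).trans_eq ?_
    rw [← ENNReal.rpow_mul, ← ENNReal.rpow_mul]
    norm_num
  rwa [← ENNReal.mul_rpow_of_nonneg _ _ (by norm_num), one_div, ENNReal.le_rpow_inv_iff two_pos,
    ← one_div]

theorem statement9_general (t lam : ℝ) (ht : -1 < t) (hlam : 0 ≤ lam)
    (h : ℝ → ℝ) (hdiff : DifferentiableOn ℝ h (Ioi 0)) (hmem : L2muSq lam t h < ⊤) :
    ENNReal.ofReal (Real.sqrt lam / (2 * Real.sqrt (1 + t))) *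
          L2muSq lam t h ^ (1 / 2 : ℝ)
        + ENNReal.ofReal (lam / 4) *
            L2muSq lam t (fun z => z / (1 + t) * h z) ^ (1 / 2 : ℝ)
      ≤ 2 ^ (1 / 2 : ℝ) * L2muSq lam t (deriv h) ^ (1 / 2 : ℝ) := by
  have ht' : 0 < 1 + t := by linarith
  have hcoeff : Real.sqrt lam / (2 * Real.sqrt (1 + t)) = Real.sqrt (lam / (4 * (1 + t))) := by
    rw [Real.sqrt_div hlam, Real.sqrt_mul zero_le_four, show (4 : ℝ) = 2 ^ 2 by norm_num,
      Real.sqrt_sq zero_le_two]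
  have hcoeff' : lam / 4 = Real.sqrt ((lam / 4) ^ 2) := (Real.sqrt_sq (by positivity)).symm
  rw [hcoeff, hcoeff', ofReal_sqrt_mul_rpow_half (by positivity),
    ofReal_sqrt_mul_rpow_half (by positivity)]
  refine (rpow_half_add_rpow_half_le _ _).trans ?_
  gcongr
  exact mul_L2muSq_add_sq_mul_L2muSq_le ht hlam hdiff hmem

/-- Weighted Poincaré–Hardy inequality:
`λ^{1/2}/(2(1+t)^{1/2}) ‖h‖_{L²_{μ_λ}} + (λ/4)‖(z/(1+t))h‖_{L²_{μ_λ}} ≤ 2‖∂_z h‖_{L²_{μ_λ}}`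
for `h ∈ H¹_{μ_λ}(ℝ₊)`. -/
theorem statement9 (t lam : ℝ) (ht : 0 ≤ t) (hlam0 : 0 ≤ lam) (hlam1 : lam ≤ 1)
    (h : ℝ → ℝ) (hdiff : Differentiable ℝ h)
    (hmem : L2muSq lam t h < ⊤) (hmem' : L2muSq lam t (deriv h) < ⊤) :
    ENNReal.ofReal (Real.sqrt lam / (2 * Real.sqrt (1 + t))) *
          L2muSq lam t h ^ (1 / 2 : ℝ)
        + ENNReal.ofReal (lam / 4) *
            L2muSq lam t (fun z => z / (1 + t) * h z) ^ (1 / 2 : ℝ)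
      ≤ 2 * L2muSq lam t (deriv h) ^ (1 / 2 : ℝ) :=
  (statement9_general t lam (by linarith) hlam0 h hdiff.differentiableOn hmem).trans <| by
    gcongr
    simpa using ENNReal.rpow_le_rpow_of_exponent_le one_le_two one_half_lt_one.le
end
end

section
/- There exists an absolute constant C > 0 such that for every 0 < r < 1 and all multi-indices α, β ∈ ℤ₊³ with β ≤ α, α₃ ≥ 1 and β₃ ≥ 1 (so that β − (0,0,1) ∈ ℤ₊³ and |β| ≥ 1), one has binom(α,β) · |α|^{−1} M_{r,α} / (M_{r,β−(0,0,1)} · M_{r,α−β+(0,1,0)}) ≤ C/|β|⁴ + C/(|α|−|β|+2)⁴. -/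
/-- `|α| = α₁ + α₂ + α₃` for a multi-index `α ∈ ℤ₊³`. -/
def msize (α : ℕ × ℕ × ℕ) : ℕ := α.1 + α.2.1 + α.2.2

/-- Componentwise order on multi-indices: `β ≤ α`. -/
def mle (β α : ℕ × ℕ × ℕ) : Prop := β.1 ≤ α.1 ∧ β.2.1 ≤ α.2.1 ∧ β.2.2 ≤ α.2.2

/-- The multi-index binomial coefficient `binom(α,β) = Π binom(αᵢ,βᵢ)`. -/
def mbinom (α β : ℕ × ℕ × ℕ) : ℕ :=
  α.1.choose β.1 * α.2.1.choose β.2.1 * α.2.2.choose β.2.2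

/-- `M_{r,α} = r^{|α|}(|α|+1)⁴/|α|!`. -/
noncomputable def Mcoef (r : ℝ) (α : ℕ × ℕ × ℕ) : ℝ :=
  r ^ msize α * ((msize α : ℝ) + 1) ^ 4 / (Nat.factorial (msize α) : ℝ)

/-!
Write `n = |α|`, `k = |β| - 1` and `l = |α| - |β| + 1`, so that `n = k + l`. The powers of `r`
cancel and the factorials combine to
`M n / (M k * M l) = ((n + 1) / ((k + 1) * (l + 1))) ^ 4 / n.choose k`.
By Vandermonde, the multi-index binomial coefficient is at most `n.choose (k + 1) ≤ n * n.choose k`,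
so the factor `1 / n` absorbs the loss of one index. What remains is the fourth power of a number
below `1 / (k + 1) + 1 / (l + 1)`.
-/

open Finset

theorem choose_mul_choose_le_choose_add (a b c d : ℕ) :
    a.choose c * b.choose d ≤ (a + b).choose (c + d) := by
  rw [Nat.add_choose_eq]
  exact single_le_sum (f := fun ij : ℕ × ℕ ↦ a.choose ij.1 * b.choose ij.2)
    (fun _ _ ↦ Nat.zero_le _) (mem_antidiagonal.2 (rfl : (c, d).1 + (c, d).2 = c + d))

theorem prod_choose_le_choose_sum {ι : Type*} (s : Finset ι) (a b : ι → ℕ) :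
    ∏ i ∈ s, (a i).choose (b i) ≤ (∑ i ∈ s, a i).choose (∑ i ∈ s, b i) := by
  induction s using Finset.cons_induction with
  | empty => simp
  | cons i s hi ih =>
    rw [prod_cons, sum_cons, sum_cons]
    exact (Nat.mul_le_mul_left _ ih).trans (choose_mul_choose_le_choose_add ..)

theorem choose_succ_le_choose_mul (n k : ℕ) : n.choose (k + 1) ≤ n.choose k * n :=
  calc n.choose (k + 1) ≤ n.choose (k + 1) * (k + 1) := Nat.le_mul_of_pos_right _ k.succ_pos
    _ = n.choose k * (n - k) := Nat.choose_succ_right_eq n k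
    _ ≤ n.choose k * n := Nat.mul_le_mul_left _ (Nat.sub_le n k)

theorem sum_tsub_single_add_one {ι : Type*} [Fintype ι] [DecidableEq ι] {β : ι → ℕ} {i : ι}
    (hi : 1 ≤ β i) : ∑ x, (β - Pi.single i 1 : ι → ℕ) x + 1 = ∑ x, β x := by
  have hle : Pi.single i 1 ≤ β := update_le_iff.2 ⟨hi, fun _ _ ↦ Nat.zero_le _⟩
  conv_rhs => rw [← tsub_add_cancel_of_le hle]
  simp [sum_add_distrib]

theorem sum_add_sum_tsub_add_single {ι : Type*} [Fintype ι] [DecidableEq ι] {α β : ι → ℕ}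
    (hβα : β ≤ α) (j : ι) :
    ∑ x, β x + ∑ x, (α - β + Pi.single j 1 : ι → ℕ) x = ∑ x, α x + 1 := by
  conv_rhs => rw [← add_tsub_cancel_of_le hβα]
  simp [sum_add_distrib, add_assoc]

theorem add_add_one_div_mul_pow_le {x y : ℝ} (hx : 0 ≤ x) (hy : 0 ≤ y) (p : ℕ) :
    ((x + y + 1) / ((x + 1) * (y + 1))) ^ p ≤
      2 ^ (p - 1) / (x + 1) ^ p + 2 ^ (p - 1) / (y + 1) ^ p :=
  calc ((x + y + 1) / ((x + 1) * (y + 1))) ^ p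
      ≤ ((x + 1)⁻¹ + (y + 1)⁻¹) ^ p := by
        rw [inv_add_inv (by positivity) (by positivity)]
        refine pow_le_pow_left₀ (by positivity) ?_ p
        exact div_le_div_of_nonneg_right (by linarith) (by positivity)
    _ ≤ 2 ^ (p - 1) * ((x + 1)⁻¹ ^ p + (y + 1)⁻¹ ^ p) :=
        add_pow_le (by positivity) (by positivity) p
    _ = 2 ^ (p - 1) / (x + 1) ^ p + 2 ^ (p - 1) / (y + 1) ^ p := by
        simp only [inv_pow, mul_add, div_eq_mul_inv]

/-- The weight `r ^ n * (n + 1) ^ p / n!` measuring `n`-th order derivatives of an analytic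
function. A multi-index enters only through its size `n`; `M_{r,α}` is the case `p = 4`. -/
noncomputable def analyticWeight (r : ℝ) (p n : ℕ) : ℝ :=
  r ^ n * ((n : ℝ) + 1) ^ p / (n.factorial : ℝ)

section analyticWeight

variable {r : ℝ}

theorem analyticWeight_add_div (hr : r ≠ 0) (p k l : ℕ) :
    analyticWeight r p (k + l) / (analyticWeight r p k * analyticWeight r p l) =
      (((k : ℝ) + l + 1) / ((k + 1) * (l + 1))) ^ p / (k + l).choose k := by
  rw [Nat.cast_add_choose ℝ]
  simp only [analyticWeight, Nat.cast_add, pow_add, div_pow, mul_pow]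
  field_simp

theorem mul_inv_mul_analyticWeight_div_le (hr : r ≠ 0) (p : ℕ) {k l b : ℕ}
    (hb : b ≤ (k + l).choose (k + 1)) :
    (b : ℝ) * ((k + l : ℕ) : ℝ)⁻¹ * analyticWeight r p (k + l) /
        (analyticWeight r p k * analyticWeight r p l) ≤
      2 ^ (p - 1) / ((k : ℝ) + 1) ^ p + 2 ^ (p - 1) / ((l : ℝ) + 1) ^ p := by
  have hcoeff : (b : ℝ) * ((k + l : ℕ) : ℝ)⁻¹ / (k + l).choose k ≤ 1 := by
    rw [← div_eq_mul_inv, div_div]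
    refine div_le_one_of_le₀ ?_ (by positivity)
    rw [mul_comm]
    exact_mod_cast hb.trans (choose_succ_le_choose_mul (k + l) k)
  calc (b : ℝ) * ((k + l : ℕ) : ℝ)⁻¹ * analyticWeight r p (k + l) /
        (analyticWeight r p k * analyticWeight r p l)
      = (b : ℝ) * ((k + l : ℕ) : ℝ)⁻¹ / (k + l).choose k *
          (((k : ℝ) + l + 1) / ((k + 1) * (l + 1))) ^ p := by
        rw [mul_div_assoc, analyticWeight_add_div hr, mul_div_left_comm, mul_comm]
    _ ≤ (((k : ℝ) + l + 1) / ((k + 1) * (l + 1))) ^ p :=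
        mul_le_of_le_one_left (by positivity) hcoeff
    _ ≤ 2 ^ (p - 1) / ((k : ℝ) + 1) ^ p + 2 ^ (p - 1) / ((l : ℝ) + 1) ^ p :=
        add_add_one_div_mul_pow_le k.cast_nonneg l.cast_nonneg p

end analyticWeight

theorem statement14_general {ι : Type*} [Fintype ι] [DecidableEq ι] {r : ℝ} (hr : r ≠ 0)
    (p : ℕ) {α β : ι → ℕ} (hβα : β ≤ α) {i : ι} (hi : 1 ≤ β i) (j : ι) :
    ((∏ x, (α x).choose (β x) : ℕ) : ℝ) * ((∑ x, α x : ℕ) : ℝ)⁻¹ *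
          analyticWeight r p (∑ x, α x) /
        (analyticWeight r p (∑ x, (β - Pi.single i 1 : ι → ℕ) x) *
          analyticWeight r p (∑ x, (α - β + Pi.single j 1 : ι → ℕ) x)) ≤
      2 ^ (p - 1) / ((∑ x, β x : ℕ) : ℝ) ^ p +
        2 ^ (p - 1) / (((∑ x, α x : ℕ) : ℝ) - ((∑ x, β x : ℕ) : ℝ) + 2) ^ p := by
  have hchoose := prod_choose_le_choose_sum univ α β
  have hβ := sum_tsub_single_add_one hi
  have hα := sum_add_sum_tsub_add_single hβα j
  set k := ∑ x, (β - Pi.single i 1 : ι → ℕ) x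
  set l := ∑ x, (α - β + Pi.single j 1 : ι → ℕ) x
  have hkl : ∑ x, α x = k + l := by omega
  rw [← hβ, hkl] at hchoose ⊢
  have hl : ((k + l : ℕ) : ℝ) - ((k + 1 : ℕ) : ℝ) + 2 = (l : ℝ) + 1 := by push_cast; ring
  rw [hl, Nat.cast_add_one]
  exact mul_inv_mul_analyticWeight_div_le hr p hchoose

theorem statement14 :
    ∃ C : ℝ, 0 < C ∧
      ∀ r : ℝ, 0 < r → r < 1 →
        ∀ α β : ℕ × ℕ × ℕ, mle β α → 1 ≤ α.2.2 → 1 ≤ β.2.2 →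
          (mbinom α β : ℝ) * ((msize α : ℝ))⁻¹ * Mcoef r α /
              (Mcoef r (β.1, β.2.1, β.2.2 - 1) *
                Mcoef r (α.1 - β.1, α.2.1 - β.2.1 + 1, α.2.2 - β.2.2))
            ≤ C / (msize β : ℝ) ^ 4
              + C / ((msize α : ℝ) - (msize β : ℝ) + 2) ^ 4 := by
  refine ⟨8, by norm_num, fun r hr _ α β ⟨h₁, h₂, h₃⟩ _ hβ ↦ ?_⟩
  have hle : ![β.1, β.2.1, β.2.2] ≤ ![α.1, α.2.1, α.2.2] := by
    simp [Pi.le_def, Fin.forall_fin_succ, h₁, h₂, h₃]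
  have h8 : (2 : ℝ) ^ (4 - 1) = 8 := by norm_num
  simpa [h8, mbinom, Mcoef, msize, analyticWeight, Fin.sum_univ_three, Fin.prod_univ_three]
    using statement14_general hr.ne' 4 hle (i := 2) hβ 1
end

section
/- There exists an absolute constant C > 0 such that for every 0 < r < 1 and all multi-indices α, β ∈ ℤ₊³ with β ≤ α, α₃ ≥ 1 and β₃ ≥ 1 (so that β + (0,1,−1) ∈ ℤ₊³), one has binom(α,β) · |α|^{−1} M_{r,α} / (M_{r,β+(0,1,−1)} · M_{r,α−β}) ≤ C/(|β|+1)⁴ + C/(|α|−|β|+1)⁴. -/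
/-!
The factor `|α|⁻¹` is at most `1`. All powers of `r` cancel and, by Vandermonde's identity,
`binom(α,β) ≤ binom(|α|,|β|)`, which is exactly compensated by the factorials in `M`. What remains
is `(|α|+1)⁴ / ((|β|+1)⁴ (|α-β|+1)⁴)`, and `|α| + 1 ≤ (|β|+1) + (|α-β|+1)` together with the
convexity of the fourth power splits it into the two terms on the right with `C = 2³`. Only the size
of the shifted index `β + (0,1,-1)` matters.
-/

theorem choose_mul_choose_le_add_choose_add (a b i j : ℕ) :
    a.choose i * b.choose j ≤ (a + b).choose (i + j) := by
  have mem : (i, j) ∈ Finset.HasAntidiagonal.antidiagonal (i + j) := by simp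
  rw [Nat.add_choose_eq]
  exact Finset.single_le_sum (f := fun ij : ℕ × ℕ ↦ a.choose ij.1 * b.choose ij.2)
    (fun _ _ ↦ Nat.zero_le _) mem

theorem add_pow_div_pow_mul_pow_le {K : Type*} [Field K] [LinearOrder K] [IsStrictOrderedRing K]
    {x y : K} (hx : 0 < x) (hy : 0 < y) (p : ℕ) :
    (x + y) ^ p / (x ^ p * y ^ p) ≤ 2 ^ (p - 1) / x ^ p + 2 ^ (p - 1) / y ^ p :=
  calc (x + y) ^ p / (x ^ p * y ^ p)
      ≤ 2 ^ (p - 1) * (x ^ p + y ^ p) / (x ^ p * y ^ p) := by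
        gcongr
        exact add_pow_le hx.le hy.le p
    _ = 2 ^ (p - 1) / x ^ p + 2 ^ (p - 1) / y ^ p := by
        field_simp
        ring

theorem mbinom_le_choose_msize (α β : ℕ × ℕ × ℕ) :
    mbinom α β ≤ (msize α).choose (msize β) :=
  (Nat.mul_le_mul_right _ (choose_mul_choose_le_add_choose_add ..)).trans
    (choose_mul_choose_le_add_choose_add ..)

theorem msize_add_msize_sub {α β : ℕ × ℕ × ℕ} (h : mle β α) :
    msize β + msize (α - β) = msize α := by
  obtain ⟨h₁, h₂, h₃⟩ := h
  simp only [msize, Prod.fst_sub, Prod.snd_sub]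
  omega

theorem msize_shift {β : ℕ × ℕ × ℕ} (h : 1 ≤ β.2.2) :
    msize (β.1, β.2.1 + 1, β.2.2 - 1) = msize β := by
  simp only [msize]
  omega

theorem mcoef_div_mul {r : ℝ} (hr : r ≠ 0) {α γ δ : ℕ × ℕ × ℕ}
    (h : msize γ + msize δ = msize α) :
    Mcoef r α / (Mcoef r γ * Mcoef r δ) =
      ((msize α : ℝ) + 1) ^ 4 / (((msize γ : ℝ) + 1) ^ 4 * ((msize δ : ℝ) + 1) ^ 4) /
        (msize α).choose (msize γ) := by
  have factorial_quotient : ((msize α).choose (msize γ) : ℝ) =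
      (msize α).factorial / ((msize γ).factorial * (msize δ).factorial) := by
    rw [← h, Nat.cast_add_choose]
  have pow_split : r ^ msize α = r ^ msize γ * r ^ msize δ := by rw [← h, pow_add]
  rw [factorial_quotient]
  simp only [Mcoef, pow_split]
  field_simp

theorem mbinom_mul_mcoef_div_le {r : ℝ} (hr : r ≠ 0) {α β γ δ : ℕ × ℕ × ℕ}
    (hγ : msize γ = msize β) (h : msize β + msize δ = msize α) :
    (mbinom α β : ℝ) * Mcoef r α / (Mcoef r γ * Mcoef r δ) ≤
      ((msize α : ℝ) + 1) ^ 4 / (((msize β : ℝ) + 1) ^ 4 * ((msize δ : ℝ) + 1) ^ 4) := by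
  have mbinom_le : (mbinom α β : ℝ) ≤ (msize α).choose (msize β) :=
    mod_cast mbinom_le_choose_msize α β
  rw [mul_div_assoc, mcoef_div_mul hr (hγ ▸ h), hγ, mul_div_left_comm]
  exact mul_le_of_le_one_right (by positivity) (div_le_one_of_le₀ mbinom_le (by positivity))

theorem statement16_general {r : ℝ} (hr : r ≠ 0) {α β γ : ℕ × ℕ × ℕ} (hβα : mle β α)
    (hγ : msize γ = msize β) :
    (mbinom α β : ℝ) * Mcoef r α / (Mcoef r γ * Mcoef r (α - β)) ≤
      8 / ((msize β : ℝ) + 1) ^ 4 + 8 / ((msize α : ℝ) - (msize β : ℝ) + 1) ^ 4 := by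
  have size_add := msize_add_msize_sub hβα
  have size_sub : (msize α : ℝ) - msize β = msize (α - β) := by
    rw [← size_add, Nat.cast_add, add_sub_cancel_left]
  have size_succ_le :
      (msize α : ℝ) + 1 ≤ ((msize β : ℝ) + 1) + ((msize (α - β) : ℝ) + 1) := by
    linarith
  rw [size_sub]
  calc (mbinom α β : ℝ) * Mcoef r α / (Mcoef r γ * Mcoef r (α - β))
      ≤ ((msize α : ℝ) + 1) ^ 4 /
          (((msize β : ℝ) + 1) ^ 4 * ((msize (α - β) : ℝ) + 1) ^ 4) :=
        mbinom_mul_mcoef_div_le hr hγ size_add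
    _ ≤ (((msize β : ℝ) + 1) + ((msize (α - β) : ℝ) + 1)) ^ 4 /
          (((msize β : ℝ) + 1) ^ 4 * ((msize (α - β) : ℝ) + 1) ^ 4) := by gcongr
    _ ≤ 2 ^ (4 - 1) / ((msize β : ℝ) + 1) ^ 4 +
          2 ^ (4 - 1) / ((msize (α - β) : ℝ) + 1) ^ 4 :=
        add_pow_div_pow_mul_pow_le (by positivity) (by positivity) 4
    _ = 8 / ((msize β : ℝ) + 1) ^ 4 + 8 / ((msize (α - β) : ℝ) + 1) ^ 4 := by norm_num

theorem statement16 :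
    ∃ C : ℝ, 0 < C ∧
      ∀ r : ℝ, 0 < r → r < 1 →
        ∀ α β : ℕ × ℕ × ℕ, mle β α → 1 ≤ α.2.2 → 1 ≤ β.2.2 →
          (mbinom α β : ℝ) * ((msize α : ℝ))⁻¹ * Mcoef r α /
              (Mcoef r (β.1, β.2.1 + 1, β.2.2 - 1) *
                Mcoef r (α.1 - β.1, α.2.1 - β.2.1, α.2.2 - β.2.2))
            ≤ C / ((msize β : ℝ) + 1) ^ 4
              + C / ((msize α : ℝ) - (msize β : ℝ) + 1) ^ 4 := by
  refine ⟨8, by norm_num, fun r hr _ α β hβα _ hβ ↦ ?_⟩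
  rw [mul_right_comm, mul_div_right_comm]
  exact (mul_le_mul_of_nonneg_right (statement16_general hr.ne' hβα (msize_shift hβ))
    (by positivity)).trans (mul_le_of_le_one_right (by positivity) (Nat.cast_inv_le_one _))
end
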